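/- Let K be a symmetric integrable function with ∫K = 1 whose Fourier transform K^Ft(t) = ∫ e^{itx} K(x) dx is compactly supported, let f_δ^Ft be a real-valued, symmetric, everywhere positive characteristic function, and let h > 0. Define L(v) = (2π)^{-1} ∫_{-∞}^{∞} e^{-itv} K^Ft(t)/f_δ^Ft(t/h) dt. Then for every real u, ∫_{v ≤ u} L(v) dv = L_1(hu), where L_1(w) = 1/2 + (2π)^{-1} ∫_{-∞}^{∞} (sin(tw)/t) · K^Ft(ht)/f_δ^Ft(t) dt. -/

import Mathlib

/-!
Write `Φ(t) = K^Ft(t) / f_δ^Ft(t/h)`, so that `L` is `(2π)⁻¹` times the inverse Fourier transform of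
the continuous, compactly supported, even function `Φ`. Once `L` is known to be Lebesgue
integrable, the formula is of Gil-Pelaez type: `L` is even and Fourier inversion at the origin gives
`∫ L = Φ(0) = 1`, so the integral of `L` over `(-∞, 0]` is `1/2`; the remaining integral over
`[0, u]` is computed by Fubini from `∫_0^u cos(tv) dv = sin(tu)/t`, and `t ↦ ht` turns the result
into `L₁(hu)`.

The integrability of `L` is the substantial point, since `f_δ^Ft` is only continuous and positive.
It is a local version of Wiener's theorem on `1/f`, proved in `integrable_invFt_div_charFun`: a
characteristic function without zeros is a smooth function `g` (from the part of the measure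
in a large ball) plus a remainder `r` of small total mass, and on the support of `K^Ft` the quotient
expands as `∑ K^Ft (-r)ⁿ / gⁿ⁺¹`. The series converges absolutely in the Wiener algebra, because
multiplying by the transform of a measure costs at most its total mass (`WienerBound.mul_ft`), and
the norms of powers of a smooth cut-off of `1/g` grow only like `(n+1)²` times the powers of its
supremum (`exists_wienerBound_pow`).
-/

open MeasureTheory Filter Topology

noncomputable section

/-- Characteristic function of a measure on `ℝ`. -/
def charFn (μ : Measure ℝ) (t : ℝ) : ℂ :=
  ∫ x, Complex.exp (Complex.I * (t * x)) ∂μ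

/-- Fourier transform `K^Ft(t) = ∫ e^{itx} K(x) dx` of a kernel `K`. -/
def KFtC (K : ℝ → ℝ) (t : ℝ) : ℂ :=
  ∫ x : ℝ, Complex.exp (Complex.I * (t * x)) * K x

/-- The deconvolution kernel
`L(v) = (2π)⁻¹ ∫ e^{-itv} K^Ft(t) / f_δ^Ft(t/h) dt`. -/
def Lker (K : ℝ → ℝ) (fδ : ℝ → ℝ) (h v : ℝ) : ℂ :=
  (2 * Real.pi : ℂ)⁻¹ * ∫ t : ℝ, Complex.exp (-(Complex.I * (t * v))) * KFtC K t / (fδ (t / h) : ℂ)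

/-- `L₁(w) = 1/2 + (2π)⁻¹ ∫ (sin(tw)/t) ⬝ K^Ft(ht)/f_δ^Ft(t) dt`. -/
def L1C (K : ℝ → ℝ) (fδ : ℝ → ℝ) (h w : ℝ) : ℂ :=
  (1 / 2 : ℂ) + (2 * Real.pi : ℂ)⁻¹ *
    ∫ t : ℝ, ((Real.sin (t * w) / t : ℝ) : ℂ) * KFtC K (h * t) / (fδ t : ℂ)

/-! ### The inverse Fourier transform and Wiener norms -/

/-- The unnormalised inverse Fourier transform `v ↦ ∫ e^{-itv} φ(t) dt`, in the convention without
`2π` in the exponent used by `KFtC` and `Lker`. -/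
def invFt (φ : ℝ → ℂ) (v : ℝ) : ℂ :=
  ∫ t : ℝ, Complex.exp (-(Complex.I * (t * v))) * φ t

/-- Quantitative membership in the Wiener algebra: `φ` is integrable and its inverse Fourier
transform is integrable with `L¹` norm at most `M`. -/
structure WienerBound (φ : ℝ → ℂ) (M : ℝ) : Prop where
  integrable : Integrable φ
  integrable_invFt : Integrable (invFt φ)
  integral_norm_le : ∫ v, ‖invFt φ v‖ ≤ M

lemma norm_exp_neg_I (t v : ℝ) : ‖Complex.exp (-(Complex.I * (t * v)))‖ = 1 := by
  rw [show -(Complex.I * ((t : ℂ) * v)) = ((-(t * v) : ℝ) : ℂ) * Complex.I by push_cast; ring]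
  exact Complex.norm_exp_ofReal_mul_I _

lemma norm_exp_I (t v : ℝ) : ‖Complex.exp (Complex.I * (t * v))‖ = 1 := by
  rw [show Complex.I * ((t : ℂ) * v) = ((t * v : ℝ) : ℂ) * Complex.I by push_cast; ring]
  exact Complex.norm_exp_ofReal_mul_I _

lemma invFt_eq_fourier (φ : ℝ → ℂ) (v : ℝ) :
    invFt φ v = FourierTransform.fourier φ (v / (2 * Real.pi)) := by
  rw [Real.fourier_real_eq_integral_exp_smul]
  unfold invFt
  congr 1 with t
  rw [smul_eq_mul]
  congr 2
  have := Real.pi_ne_zero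
  push_cast
  have h2 : (Real.pi : ℂ) ≠ 0 := by exact_mod_cast this
  field_simp

lemma norm_invFt_le (φ : ℝ → ℂ) (v : ℝ) : ‖invFt φ v‖ ≤ ∫ t, ‖φ t‖ := by
  refine (norm_integral_le_integral_norm _).trans_eq ?_
  simp [norm_exp_neg_I]

lemma integrable_exp_mul {φ : ℝ → ℂ} (hφ : Integrable φ) (v : ℝ) :
    Integrable (fun t : ℝ => Complex.exp (-(Complex.I * (t * v))) * φ t) := by
  refine hφ.bdd_mul (c := 1) (by fun_prop) ?_
  exact Eventually.of_forall fun t => (norm_exp_neg_I t v).le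

lemma continuous_invFt {φ : ℝ → ℂ} (hφ : Integrable φ) : Continuous (invFt φ) := by
  refine continuous_of_dominated (bound := fun t => ‖φ t‖) ?_ ?_ hφ.norm ?_
  · exact fun v => (integrable_exp_mul hφ v).aestronglyMeasurable
  · intro v
    exact Eventually.of_forall fun t => by simp [norm_exp_neg_I]
  · exact Eventually.of_forall fun t => by fun_prop

/-- Two integrations by parts give the decay `(1 + v²)⁻¹` of the inverse Fourier transform. -/
lemma wienerBound_of_contDiff {φ : ℝ → ℂ} (hφ : ContDiff ℝ 2 φ) (hc : HasCompactSupport φ) :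
    WienerBound φ (Real.pi * ((∫ t, ‖φ t‖) + ∫ t, ‖deriv (deriv φ) t‖)) := by
  have h1 : ContDiff ℝ 1 (deriv φ) := by
    have : ContDiff ℝ (1 + 1) φ := by simpa [one_add_one_eq_two] using hφ
    exact (contDiff_succ_iff_deriv.1 this).2.2
  have h2 : Continuous (deriv (deriv φ)) := h1.continuous_deriv le_rfl
  have hc1 : HasCompactSupport (deriv φ) := hc.deriv
  have hc2 : HasCompactSupport (deriv (deriv φ)) := hc1.deriv
  have i0 : Integrable φ := hφ.continuous.integrable_of_hasCompactSupport hc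
  have i1 : Integrable (deriv φ) := h1.continuous.integrable_of_hasCompactSupport hc1
  have i2 : Integrable (deriv (deriv φ)) := h2.integrable_of_hasCompactSupport hc2
  have key : ∀ v : ℝ, ‖invFt φ v‖ ≤
      ((∫ t, ‖φ t‖) + ∫ t, ‖deriv (deriv φ) t‖) * (1 + v ^ 2)⁻¹ := by
    intro v
    have e : invFt (deriv (deriv φ)) v = (Complex.I * v) ^ 2 * invFt φ v := by
      rw [invFt_eq_fourier, invFt_eq_fourier,
        Real.fourier_deriv i1 (h1.differentiable one_ne_zero) i2,
        Real.fourier_deriv i0 (hφ.differentiable two_ne_zero) i1]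
      have h2 : (Real.pi : ℂ) ≠ 0 := by exact_mod_cast Real.pi_ne_zero
      simp only [smul_eq_mul]
      push_cast
      field_simp
    have e2 : ‖invFt (deriv (deriv φ)) v‖ = v ^ 2 * ‖invFt φ v‖ := by
      rw [e]; simp
    have a := norm_invFt_le φ v
    have b := norm_invFt_le (deriv (deriv φ)) v
    rw [← div_eq_mul_inv, le_div_iff₀ (by positivity)]
    linarith
  have hint : Integrable (fun v : ℝ =>
      ((∫ t, ‖φ t‖) + ∫ t, ‖deriv (deriv φ) t‖) * (1 + v ^ 2)⁻¹) :=
    integrable_inv_one_add_sq.const_mul _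
  have hJ : Integrable (invFt φ) :=
    hint.mono' (continuous_invFt i0).aestronglyMeasurable (Eventually.of_forall key)
  refine ⟨i0, hJ, ?_⟩
  calc ∫ v, ‖invFt φ v‖ ≤ ∫ v : ℝ,
        ((∫ t, ‖φ t‖) + ∫ t, ‖deriv (deriv φ) t‖) * (1 + v ^ 2)⁻¹ :=
        integral_mono hJ.norm hint key
    _ = _ := by rw [integral_const_mul, integral_univ_inv_one_add_sq, mul_comm]

/-- Multiplying by the Fourier transform of the finite complex measure `k dν` convolves the
inverse Fourier transform with it, hence multiplies its `L¹` norm by at most `∫ ‖k‖ dν`. -/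
lemma WienerBound.mul_ft {φ : ℝ → ℂ} {M : ℝ} (hφ : WienerBound φ M) (ν : Measure ℝ) [SFinite ν]
    {k : ℝ → ℂ} (hk : Integrable k ν) {ψ : ℝ → ℂ}
    (hψ : ∀ t, ψ t = ∫ x, Complex.exp (Complex.I * (t * x)) * k x ∂ν) :
    WienerBound (fun t => φ t * ψ t) ((∫ x, ‖k x‖ ∂ν) * M) := by
  have hψb : ∀ t, ‖ψ t‖ ≤ ∫ x, ‖k x‖ ∂ν := by
    intro t
    rw [hψ]
    refine (norm_integral_le_integral_norm _).trans_eq ?_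
    simp [norm_exp_I]
  have hψc : Continuous ψ := by
    rw [funext hψ]
    refine continuous_of_dominated (bound := fun x => ‖k x‖) ?_ ?_ hk.norm ?_
    · exact fun t => (Continuous.aestronglyMeasurable (by fun_prop)).mul hk.aestronglyMeasurable
    · exact fun t => Eventually.of_forall fun x => by simp [norm_exp_I]
    · exact Eventually.of_forall fun x => by fun_prop
  have hi : Integrable (fun t => φ t * ψ t) :=
    hφ.integrable.mul_bdd (c := ∫ x, ‖k x‖ ∂ν) hψc.aestronglyMeasurable
      (Eventually.of_forall hψb)
  have hconv : ∀ v, invFt (fun t => φ t * ψ t) v = ∫ x, k x * invFt φ (v - x) ∂ν := by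
    intro v
    have hprod : Integrable (Function.uncurry fun (t x : ℝ) =>
        Complex.exp (-(Complex.I * (t * (v - x : ℝ)))) * (φ t * k x)) (volume.prod ν) := by
      refine (hφ.integrable.mul_prod hk).bdd_mul (c := 1) ?_ ?_
      · exact Continuous.aestronglyMeasurable (by fun_prop)
      · exact Eventually.of_forall fun p => (norm_exp_neg_I _ _).le
    calc invFt (fun t => φ t * ψ t) v
        = ∫ t : ℝ, ∫ x : ℝ,
          Complex.exp (-(Complex.I * (t * (v - x : ℝ)))) * (φ t * k x) ∂ν := by
          unfold invFt
          congr 1 with t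
          simp only [hψ]
          rw [← integral_const_mul, ← integral_const_mul]
          congr 1 with x
          have : Complex.exp (-(Complex.I * (t * (v - x : ℝ)))) =
              Complex.exp (-(Complex.I * (t * v))) * Complex.exp (Complex.I * (t * x)) := by
            rw [← Complex.exp_add]; congr 1; push_cast; ring
          rw [this]; ring
      _ = ∫ x : ℝ, (∫ t : ℝ,
          Complex.exp (-(Complex.I * (t * (v - x : ℝ)))) * (φ t * k x)) ∂ν :=
          integral_integral_swap hprod
      _ = _ := by
          congr 1 with x
          unfold invFt
          rw [← integral_const_mul]
          congr 1 with t
          ring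
  have hp : Integrable (fun p : ℝ × ℝ => k p.2 * invFt φ (p.1 - p.2)) (volume.prod ν) :=
    hk.convolution_integrand (ContinuousLinearMap.mul ℝ ℂ) hφ.integrable_invFt
  have hJ : Integrable (invFt fun t => φ t * ψ t) := by
    rw [funext hconv]
    exact hp.integral_prod_left
  refine ⟨hi, hJ, ?_⟩
  calc ∫ v, ‖invFt (fun t => φ t * ψ t) v‖
      ≤ ∫ v, ∫ x, ‖k x * invFt φ (v - x)‖ ∂ν := by
        refine integral_mono hJ.norm hp.norm.integral_prod_left fun v => ?_
        simp only [hconv]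
        exact norm_integral_le_integral_norm _
    _ = ∫ x, (∫ v, ‖k x * invFt φ (v - x)‖) ∂ν := integral_integral_swap hp.norm
    _ = (∫ x, ‖k x‖ ∂ν) * ∫ v, ‖invFt φ v‖ := by
        rw [← integral_mul_const]
        congr 1 with x
        simp only [norm_mul]
        rw [integral_const_mul, integral_sub_right_eq_self (fun v => ‖invFt φ v‖)]
    _ ≤ _ := by
        gcongr
        exact hφ.integral_norm_le

lemma WienerBound.mul_ft_pow {φ : ℝ → ℂ} {M : ℝ} (hφ : WienerBound φ M) (ν : Measure ℝ)
    [SFinite ν] {k : ℝ → ℂ} (hk : Integrable k ν) {ψ : ℝ → ℂ}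
    (hψ : ∀ t, ψ t = ∫ x, Complex.exp (Complex.I * (t * x)) * k x ∂ν) (n : ℕ) :
    WienerBound (fun t => φ t * ψ t ^ n) ((∫ x, ‖k x‖ ∂ν) ^ n * M) := by
  induction n with
  | zero => simpa using hφ
  | succ n ih =>
    have := ih.mul_ft ν hk hψ
    simpa only [pow_succ, mul_assoc, mul_comm, mul_left_comm] using this

/-- A series converging in `L¹` whose inverse transforms converge absolutely in `L¹` has an
integrable inverse transform. -/
lemma integrable_invFt_tsum {φ : ℕ → ℝ → ℂ} {M : ℕ → ℝ} (hφ : ∀ n, WienerBound (φ n) (M n))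
    (hM : Summable M) (hs : Summable fun n => ∫ t, ‖φ n t‖) {Φ : ℝ → ℂ} (hΦ : Integrable Φ)
    (hsum : ∀ t, HasSum (fun n => φ n t) (Φ t)) : Integrable (invFt Φ) := by
  have hJ : ∀ v, invFt Φ v = ∑' n, invFt (φ n) v := by
    intro v
    have h := hasSum_integral_of_summable_integral_norm
      (fun n => integrable_exp_mul (hφ n).integrable v) (by simpa [norm_exp_neg_I] using hs)
    rw [show (∑' n, invFt (φ n) v) = _ from h.tsum_eq]
    unfold invFt
    congr 1 with t
    exact (((hsum t).mul_left _).tsum_eq).symm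
  refine ⟨(continuous_invFt hΦ).aestronglyMeasurable, ?_⟩
  have h0 : ∀ n, 0 ≤ M n := fun n =>
    (integral_nonneg fun v => norm_nonneg _).trans (hφ n).integral_norm_le
  calc ∫⁻ v, ‖invFt Φ v‖ₑ ≤ ∫⁻ v, ∑' n, ‖invFt (φ n) v‖ₑ := by
        refine lintegral_mono fun v => ?_
        rw [hJ]
        exact enorm_tsum_le_tsum_enorm
    _ = ∑' n, ∫⁻ v, ‖invFt (φ n) v‖ₑ :=
        lintegral_tsum fun n => (hφ n).integrable_invFt.aestronglyMeasurable.enorm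
    _ ≤ ∑' n, ENNReal.ofReal (M n) := by
        refine ENNReal.tsum_le_tsum fun n => ?_
        rw [← ofReal_integral_norm_eq_lintegral_enorm (hφ n).integrable_invFt]
        exact ENNReal.ofReal_le_ofReal (hφ n).integral_norm_le
    _ < ⊤ := by
        rw [← ENNReal.ofReal_tsum_of_nonneg h0 hM]
        exact ENNReal.ofReal_lt_top

lemma WienerBound.mono {φ : ℝ → ℂ} {M M' : ℝ} (hφ : WienerBound φ M) (h : M ≤ M') :
    WienerBound φ M' :=
  ⟨hφ.integrable, hφ.integrable_invFt, hφ.integral_norm_le.trans h⟩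

/-! ### Division by a characteristic function without zeros -/

/-- For `q` of class `C²` with compact support, the Wiener norm of `q ^ (n + 1)` grows at the
exponential rate given by the supremum of `|q|`, up to a quadratic factor. -/
lemma exists_wienerBound_pow {q : ℝ → ℂ} (hq : ContDiff ℝ 2 q) (hc : HasCompactSupport q)
    {Q : ℝ} (hQ : 0 < Q) (hqQ : ∀ t, ‖q t‖ ≤ Q) :
    ∃ C : ℝ, ∀ n : ℕ,
      WienerBound (fun t => q t ^ (n + 1)) (C * ((n + 1 : ℝ) ^ 2 * Q ^ n)) := by
  have h1 : ContDiff ℝ 1 (deriv q) := by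
    have : ContDiff ℝ (1 + 1) q := by simpa [one_add_one_eq_two] using hq
    exact (contDiff_succ_iff_deriv.1 this).2.2
  have h2 : Continuous (deriv (deriv q)) := h1.continuous_deriv le_rfl
  have hd0 : ∀ t, HasDerivAt q (deriv q t) t := fun t =>
    (hq.differentiable two_ne_zero t).hasDerivAt
  have hd1 : ∀ t, HasDerivAt (deriv q) (deriv (deriv q) t) t := fun t =>
    (h1.differentiable one_ne_zero t).hasDerivAt
  have i0 : Integrable (fun t => ‖q t‖) := (hq.continuous.integrable_of_hasCompactSupport hc).norm
  have i1 : Integrable (fun t => ‖deriv q t‖ ^ 2) := by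
    refine Continuous.integrable_of_hasCompactSupport (h1.continuous.norm.pow 2) ?_
    exact hc.deriv.comp_left (g := fun z : ℂ => ‖z‖ ^ 2) (by simp)
  have i2 : Integrable (fun t => ‖deriv (deriv q) t‖) :=
    (h2.integrable_of_hasCompactSupport hc.deriv.deriv).norm
  refine ⟨Real.pi * ((∫ t, ‖q t‖) + ((∫ t, ‖deriv q t‖ ^ 2) / Q + ∫ t, ‖deriv (deriv q) t‖)),
    fun n => ?_⟩
  have hpc : HasCompactSupport (fun t => q t ^ (n + 1)) :=
    hc.comp_left (g := fun z : ℂ => z ^ (n + 1)) (by simp)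
  have hp2 : ContDiff ℝ 2 (fun t => q t ^ (n + 1)) := hq.pow _
  refine (wienerBound_of_contDiff hp2 hpc).mono ?_
  have e1 : deriv (fun t => q t ^ (n + 1)) = fun t => ((n + 1 : ℕ) : ℂ) * q t ^ n * deriv q t := by
    ext t
    have := ((hd0 t).pow (n + 1)).deriv
    rw [show q ^ (n + 1) = fun t => q t ^ (n + 1) from rfl] at this
    simpa using this
  have e2 : ∀ t, deriv (deriv fun t => q t ^ (n + 1)) t =
      (n + 1 : ℂ) * (n * q t ^ (n - 1) * deriv q t ^ 2 + q t ^ n * deriv (deriv q) t) := by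
    intro t
    rw [e1]
    have := ((((hd0 t).pow n).const_mul ((n + 1 : ℕ) : ℂ)).mul (hd1 t)).deriv
    rw [show (fun t => ((n + 1 : ℕ) : ℂ) * q t ^ n * deriv q t) =
      (fun t => ((n + 1 : ℕ) : ℂ) * (q ^ n) t) * deriv q from rfl, this]
    push_cast [Pi.pow_apply]
    ring
  -- for `n = 0` the truncated exponent is harmless, both sides being zero
  have hn : (n : ℝ) * Q ^ (n - 1) = n * Q ^ n / Q := by
    rcases n with _ | n
    · simp
    · rw [pow_succ]; simp; field_simp
  have b0 : ∀ t, ‖q t ^ (n + 1)‖ ≤ (n + 1 : ℝ) ^ 2 * Q ^ n * ‖q t‖ := by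
    intro t
    rw [norm_pow, pow_succ]
    have : ‖q t‖ ^ n ≤ Q ^ n := pow_le_pow_left₀ (norm_nonneg _) (hqQ t) n
    have : (1 : ℝ) * Q ^ n ≤ (n + 1 : ℝ) ^ 2 * Q ^ n := by
      gcongr
      have : (0 : ℝ) ≤ n := n.cast_nonneg
      nlinarith
    gcongr
    linarith
  have b2 : ∀ t, ‖deriv (deriv fun t => q t ^ (n + 1)) t‖ ≤
      (n + 1 : ℝ) ^ 2 * Q ^ n * (‖deriv q t‖ ^ 2 / Q + ‖deriv (deriv q) t‖) := by
    intro t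
    rw [e2, norm_mul, show (n + 1 : ℂ) = ((n + 1 : ℕ) : ℂ) by push_cast; rfl, Complex.norm_natCast]
    have hs : ‖(n : ℂ) * q t ^ (n - 1) * deriv q t ^ 2 + q t ^ n * deriv (deriv q) t‖ ≤
        n * Q ^ (n - 1) * ‖deriv q t‖ ^ 2 + Q ^ n * ‖deriv (deriv q) t‖ := by
      refine (norm_add_le _ _).trans ?_
      simp only [norm_mul, norm_pow, Complex.norm_natCast]
      gcongr <;> exact hqQ t
    have hs2 : n * Q ^ n / Q * ‖deriv q t‖ ^ 2 + Q ^ n * ‖deriv (deriv q) t‖ ≤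
        (n + 1 : ℝ) * Q ^ n / Q * ‖deriv q t‖ ^ 2 +
          (n + 1 : ℝ) * Q ^ n * ‖deriv (deriv q) t‖ := by
      gcongr
      · linarith
      · have : 0 ≤ (n : ℝ) * Q ^ n := by positivity
        nlinarith
    rw [hn] at hs
    calc ((n + 1 : ℕ) : ℝ) * _ ≤ ((n + 1 : ℕ) : ℝ) * ((n + 1 : ℝ) * Q ^ n / Q * ‖deriv q t‖ ^ 2 +
          (n + 1 : ℝ) * Q ^ n * ‖deriv (deriv q) t‖) :=
          mul_le_mul_of_nonneg_left (hs.trans hs2) (by positivity)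
      _ = _ := by push_cast; ring
  have j0 : ∫ t, ‖q t ^ (n + 1)‖ ≤ (n + 1 : ℝ) ^ 2 * Q ^ n * ∫ t, ‖q t‖ := by
    rw [← integral_const_mul]
    exact integral_mono_of_nonneg (Eventually.of_forall fun _ => norm_nonneg _)
      (i0.const_mul _) (Eventually.of_forall b0)
  have j2 : ∫ t, ‖deriv (deriv fun t => q t ^ (n + 1)) t‖ ≤ (n + 1 : ℝ) ^ 2 * Q ^ n *
      ((∫ t, ‖deriv q t‖ ^ 2) / Q + ∫ t, ‖deriv (deriv q) t‖) := by
    rw [← integral_div, ← integral_add (i1.div_const Q) i2, ← integral_const_mul]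
    exact integral_mono_of_nonneg (Eventually.of_forall fun _ => norm_nonneg _)
      (((i1.div_const Q).add i2).const_mul _) (Eventually.of_forall b2)
  rw [mul_assoc]
  refine mul_le_mul_of_nonneg_left ?_ Real.pi_pos.le
  linarith

/-- A local form of Wiener's `1/f` theorem: if `ψ` is the Fourier transform of an integrable
function and has compact support, and the characteristic function of `μ` has no zeros, then
the inverse Fourier transform of the quotient is integrable.

The characteristic function is split as `g + r`, where `g` comes from the part of `μ` in a large
ball and `r` from the small remaining mass. On the support of `ψ` the quotient `ψ / (g + r)` is
`∑ ψ (-r)ⁿ / gⁿ⁺¹`; the factor `rⁿ` has Wiener norm at most `εⁿ`, while the smooth factor `g⁻ⁿ⁻¹`,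
cut off outside the support of `ψ`, is controlled by the supremum of `|g|⁻¹`. -/
theorem integrable_invFt_div_charFun {k : ℝ → ℂ} (hk : Integrable k) {ψ : ℝ → ℂ}
    (hψ : ∀ t, ψ t = ∫ x : ℝ, Complex.exp (Complex.I * (t * x)) * k x)
    (hψs : HasCompactSupport ψ) (hψi : Integrable ψ)
    (μ : Measure ℝ) [IsProbabilityMeasure μ] (h0 : ∀ t, charFun μ t ≠ 0) :
    Integrable (fun t => ψ t / charFun μ t) ∧
      Integrable (invFt fun t => ψ t / charFun μ t) := by
  obtain ⟨ρ, hρ, hsub⟩ : ∃ ρ : ℝ, 0 < ρ ∧ tsupport ψ ⊆ Metric.closedBall 0 ρ := by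
    obtain ⟨r, hr⟩ := hψs.isCompact.isBounded.subset_closedBall 0
    exact ⟨max r 1, by positivity, hr.trans (Metric.closedBall_subset_closedBall (le_max_left _ _))⟩
  obtain ⟨c, hc, hcb⟩ : ∃ c : ℝ, 0 < c ∧
      ∀ t ∈ Metric.closedBall (0 : ℝ) (2 * ρ), 3 * c ≤ ‖charFun μ t‖ := by
    obtain ⟨t₀, -, ht₀⟩ := (isCompact_closedBall (0 : ℝ) (2 * ρ)).exists_isMinOn
      ⟨0, by simp; positivity⟩ (continuous_charFun (μ := μ)).norm.continuousOn
    refine ⟨‖charFun μ t₀‖ / 3, by have := norm_pos_iff.2 (h0 t₀); positivity, fun t ht => ?_⟩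
    have := ht₀ ht
    have h2 : ‖charFun μ t₀‖ ≤ ‖charFun μ t‖ := this
    linarith
  -- `3 * c` bounds `|charFun μ|` below on the cut-off ball; a tail of mass `c` then leaves
  -- `|g| ≥ 2 * c` there, so that `|r / g| ≤ 1 / 2`.
  obtain ⟨R, hR⟩ : ∃ R : ℝ, μ.real (Metric.closedBall 0 R)ᶜ ≤ c := by
    have ht := tendsto_measure_compl_closedBall_of_isTightMeasureSet
      (isTightMeasureSet_singleton (μ := μ)) 0
    simp only [Set.mem_singleton_iff, iSup_iSup_eq_left] at ht
    obtain ⟨R, hR⟩ := (ht.eventually_le_const (u := ENNReal.ofReal c) (by simpa using hc)).exists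
    exact ⟨R, ENNReal.toReal_le_of_le_ofReal hc.le hR⟩
  set B := Metric.closedBall (0 : ℝ) R with hB
  set g : ℝ → ℂ := charFun (μ.restrict B) with hg
  set r : ℝ → ℂ := charFun (μ.restrict Bᶜ) with hr
  have hsplit : ∀ t, charFun μ t = g t + r t := by
    intro t
    simp only [hg, hr, charFun_apply_real]
    refine (integral_add_compl Metric.isClosed_closedBall.measurableSet ?_).symm
    refine (integrable_const (1 : ℝ)).mono' (Continuous.aestronglyMeasurable (by fun_prop)) ?_
    refine Eventually.of_forall fun x => ?_
    rw [show (t : ℂ) * x * Complex.I = ((t * x : ℝ) : ℂ) * Complex.I by push_cast; ring]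
    exact (Complex.norm_exp_ofReal_mul_I _).le
  have hrb : ∀ t, ‖r t‖ ≤ c := fun t => by
    refine (norm_charFun_le t).trans ?_
    simpa using hR
  have hgb : ∀ t ∈ Metric.closedBall (0 : ℝ) (2 * ρ), 2 * c ≤ ‖g t‖ := by
    intro t ht
    have h1 := hcb t ht
    rw [hsplit] at h1
    have h2 := norm_add_le (g t) (r t)
    have h3 := hrb t
    linarith
  have hgs : ContDiff ℝ 2 g := by
    have := contDiff_charFun (μ := μ.restrict B) (n := 2) ?_
    · exact_mod_cast this
    · refine MemLp.of_bound (C := R) (by fun_prop) ?_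
      filter_upwards [ae_restrict_mem Metric.isClosed_closedBall.measurableSet] with x hx
      simpa [hB] using hx
  let χ : ContDiffBump (0 : ℝ) := ⟨ρ, 2 * ρ, hρ, by linarith⟩
  -- a globally smooth function that equals `1 / g` wherever `ψ` is nonzero
  set q : ℝ → ℂ := fun t => (χ t : ℂ) / g t with hqdef
  have hq0 : ∀ t ∉ Metric.closedBall (0 : ℝ) (2 * ρ), q t = 0 := by
    intro t ht
    have : χ t = 0 := χ.zero_of_le_dist (not_le.1 ht).le
    simp [hqdef, this]
  have hqs : ContDiff ℝ 2 q := by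
    rw [contDiff_iff_contDiffAt]
    intro t
    by_cases ht : t ∈ Metric.closedBall (0 : ℝ) (2 * ρ)
    · have hgt : g t ≠ 0 := by
        have := hgb t ht
        rw [← norm_pos_iff]; linarith
      have hχ : ContDiff ℝ 2 (fun t => (χ t : ℂ)) :=
        Complex.ofRealCLM.contDiff.comp χ.contDiff
      simp only [hqdef, div_eq_mul_inv]
      exact hχ.contDiffAt.mul (hgs.contDiffAt.inv hgt)
    · have : q =ᶠ[𝓝 t] fun _ => 0 := by
        filter_upwards [Metric.isClosed_closedBall.isOpen_compl.mem_nhds ht] with s hs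
        exact hq0 s hs
      exact contDiffAt_const.congr_of_eventuallyEq this
  have hqc : HasCompactSupport q :=
    HasCompactSupport.intro (isCompact_closedBall (0 : ℝ) (2 * ρ)) fun t ht => hq0 t ht
  have hqb : ∀ t, ‖q t‖ ≤ (2 * c)⁻¹ := by
    intro t
    by_cases ht : t ∈ Metric.closedBall (0 : ℝ) (2 * ρ)
    · have h1 := hgb t ht
      rw [hqdef, norm_div, Complex.norm_real, Real.norm_of_nonneg χ.nonneg, div_eq_mul_inv]
      calc χ t * ‖g t‖⁻¹ ≤ 1 * (2 * c)⁻¹ := by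
            gcongr
            exact χ.le_one
        _ = _ := one_mul _
    · rw [hq0 t ht, norm_zero]; positivity
  have hq1 : ∀ t, ψ t ≠ 0 → q t = (g t)⁻¹ ∧ g t ≠ 0 := by
    intro t ht
    have h1 : t ∈ Metric.closedBall (0 : ℝ) ρ := hsub (subset_tsupport ψ ht)
    have h2 : χ t = 1 := χ.one_of_mem_closedBall h1
    have h3 := hgb t (Metric.closedBall_subset_closedBall (by linarith) h1)
    exact ⟨by simp [hqdef, h2], by rw [← norm_pos_iff]; linarith⟩
  obtain ⟨C, hC⟩ := exists_wienerBound_pow hqs hqc (by positivity : 0 < (2 * c)⁻¹) hqb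
  have hrψ : ∀ t, -r t = ∫ x, Complex.exp (Complex.I * (t * x)) * (-1 : ℂ) ∂(μ.restrict Bᶜ) := by
    intro t
    rw [integral_mul_const, hr, charFun_apply_real]
    simp [mul_comm]
  have hmass : ∫ _x : ℝ, ‖(-1 : ℂ)‖ ∂(μ.restrict Bᶜ) ≤ c := by simpa using hR
  have hC0 : 0 ≤ C := by
    have := (integral_nonneg fun v => norm_nonneg _).trans (hC 0).integral_norm_le
    simpa using this
  set φ : ℕ → ℝ → ℂ := fun n t => q t ^ (n + 1) * (-r t) ^ n * ψ t with hφ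
  set A := ∫ x, ‖k x‖ with hA
  have hA0 : 0 ≤ A := integral_nonneg fun _ => norm_nonneg _
  have hW : ∀ n, WienerBound (φ n) (A * C * ((n + 1 : ℝ) ^ 2 * (1 / 2) ^ n)) := by
    intro n
    refine (((hC n).mul_ft_pow (μ.restrict Bᶜ) (integrable_const (-1 : ℂ)) hrψ n).mul_ft
      volume hk hψ).mono ?_
    have : (1 / 2 : ℝ) ^ n = c ^ n * ((2 * c)⁻¹) ^ n := by
      rw [← mul_pow]; congr 1; field_simp
    rw [this]
    calc A * ((∫ _x : ℝ, ‖(-1 : ℂ)‖ ∂(μ.restrict Bᶜ)) ^ n *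
          (C * ((n + 1 : ℝ) ^ 2 * ((2 * c)⁻¹) ^ n)))
        ≤ A * (c ^ n * (C * ((n + 1 : ℝ) ^ 2 * ((2 * c)⁻¹) ^ n))) := by
          gcongr
      _ = _ := by ring
  have hS : Summable fun n : ℕ => A * C * ((n + 1 : ℝ) ^ 2 * (1 / 2) ^ n) := by
    refine Summable.mul_left _ ?_
    have h1 := (summable_nat_add_iff 1).2
      (summable_pow_mul_geometric_of_norm_lt_one (R := ℝ) 2 (r := 1 / 2) (by norm_num))
    refine (h1.mul_left 2).congr fun n => ?_
    push_cast
    ring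
  have hφb : ∀ n t, ‖φ n t‖ ≤ (1 / 2) ^ n * ((2 * c)⁻¹ * ‖ψ t‖) := by
    intro n t
    simp only [hφ, norm_mul, norm_pow, norm_neg]
    calc ‖q t‖ ^ (n + 1) * ‖r t‖ ^ n * ‖ψ t‖ ≤ ((2 * c)⁻¹) ^ (n + 1) * c ^ n * ‖ψ t‖ := by
          gcongr
          · exact hqb t
          · exact hrb t
      _ = ((2 * c)⁻¹ * c) ^ n * ((2 * c)⁻¹ * ‖ψ t‖) := by rw [mul_pow, pow_succ]; ring
      _ = _ := by congr 2; field_simp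
  have hs : Summable fun n => ∫ t, ‖φ n t‖ := by
    refine Summable.of_nonneg_of_le (fun n => integral_nonneg fun _ => norm_nonneg _)
      (f := fun n => (1 / 2) ^ n * ∫ t, (2 * c)⁻¹ * ‖ψ t‖) (fun n => ?_)
      ((summable_geometric_of_lt_one (by norm_num) (by norm_num)).mul_right _)
    rw [← integral_const_mul]
    exact integral_mono_of_nonneg (Eventually.of_forall fun _ => norm_nonneg _)
      ((hψi.norm.const_mul _).const_mul _) (Eventually.of_forall (hφb n))
  have hsum : ∀ t, HasSum (fun n => φ n t) (ψ t / charFun μ t) := by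
    intro t
    by_cases ht : ψ t = 0
    · simp [hφ, ht]
    obtain ⟨h1, h2⟩ := hq1 t ht
    have hlt : ‖q t * -r t‖ < 1 := by
      rw [norm_mul, norm_neg]
      calc ‖q t‖ * ‖r t‖ ≤ (2 * c)⁻¹ * c := by
            gcongr
            · exact hqb t
            · exact hrb t
        _ < 1 := by rw [show (2 * c)⁻¹ * c = 1 / 2 by field_simp]; norm_num
    have hg := (hasSum_geometric_of_norm_lt_one hlt).mul_left (q t * ψ t)
    have h3 := h0 t
    rw [hsplit] at h3 ⊢
    have e1 : (fun n => φ n t) = fun n => q t * ψ t * (q t * -r t) ^ n := by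
      ext n
      simp only [hφ]
      ring
    have e2 : ψ t / (g t + r t) = q t * ψ t * (1 - q t * -r t)⁻¹ := by
      have h4 : 1 - q t * -r t = (g t + r t) * (g t)⁻¹ := by
        rw [h1]; field_simp; ring
      rw [h4, h1]
      field_simp
    rw [e1, e2]
    exact hg
  have hΦ : Integrable (fun t => ψ t / charFun μ t) := by
    have hcont : Continuous fun t => (charFun μ t)⁻¹ := continuous_charFun.inv₀ h0
    refine (hψi.const_mul (1 : ℂ)).norm.mul_const ((3 * c)⁻¹) |>.mono'
      (hψi.aestronglyMeasurable.mul hcont.aestronglyMeasurable)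
      (Eventually.of_forall fun t => ?_)
    by_cases ht : ψ t = 0
    · simp [ht]
    have h1 : t ∈ Metric.closedBall (0 : ℝ) ρ := hsub (subset_tsupport ψ ht)
    have h3 := hcb t (Metric.closedBall_subset_closedBall (by linarith) h1)
    rw [norm_div, one_mul, div_eq_mul_inv]
    gcongr
  exact ⟨hΦ, integrable_invFt_tsum hW hS hs hΦ hsum⟩

/-! ### Inversion at the origin and the half-line integral -/

lemma continuous_KFtC {K : ℝ → ℝ} (hK : Integrable K) : Continuous (KFtC K) := by
  refine continuous_of_dominated (bound := fun x => ‖K x‖) ?_ ?_ hK.norm ?_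
  · exact fun t => (Continuous.aestronglyMeasurable (by fun_prop)).mul
      hK.ofReal.aestronglyMeasurable
  · exact fun t => Eventually.of_forall fun x => by simp [norm_exp_I]
  · exact Eventually.of_forall fun x => by fun_prop

lemma KFtC_neg {K : ℝ → ℝ} (hKsym : ∀ x, K (-x) = K x) (t : ℝ) : KFtC K (-t) = KFtC K t := by
  unfold KFtC
  rw [← integral_neg_eq_self]
  congr 1 with x
  rw [hKsym]
  push_cast
  congr 2
  ring

/-- Fourier inversion at the origin. -/
lemma integral_invFt {Φ : ℝ → ℂ} (hc : Continuous Φ) (hi : Integrable Φ)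
    (hJ : Integrable (invFt Φ)) : ∫ v, invFt Φ v = 2 * Real.pi * Φ 0 := by
  have hpi : (2 * Real.pi) ≠ 0 := by have := Real.pi_ne_zero; positivity
  have hF : Integrable (FourierTransform.fourier Φ) := by
    have := hJ.comp_mul_left' hpi
    refine this.congr (Eventually.of_forall fun v => ?_)
    simp only [invFt_eq_fourier]
    rw [mul_div_cancel_left₀ _ hpi]
  have h0 := congrFun (hc.fourierInv_fourier_eq hi hF) 0
  rw [Real.fourierInv_eq'] at h0
  simp only [inner_zero_right, mul_zero, Complex.ofReal_zero, zero_mul, Complex.exp_zero,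
    one_smul] at h0
  simp only [invFt_eq_fourier]
  rw [Measure.integral_comp_div (fun w => FourierTransform.fourier Φ w), h0,
    abs_of_pos (by positivity)]
  simp

lemma integral_Iic_zero_of_even {f : ℝ → ℂ} (hf : ∀ x, f (-x) = f x) (hi : Integrable f) :
    ∫ v in Set.Iic (0 : ℝ), f v = (∫ v, f v) / 2 := by
  have h1 : ∫ v in Set.Iic (0 : ℝ), f v = ∫ v in Set.Ioi (0 : ℝ), f v := by
    have := integral_comp_neg_Iic (0 : ℝ) f
    simpa [hf] using this
  have h2 := intervalIntegral.integral_Iic_add_Ioi (b := (0 : ℝ)) hi.integrableOn hi.integrableOn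
  rw [← h1] at h2
  rw [← h2]
  ring

/-- For even `Φ` the sine part of the exponential drops out, and integrating `cos (tv)` in `v`
under the integral sign gives `sin (tu) / t`. -/
lemma intervalIntegral_invFt_of_even {Φ : ℝ → ℂ} (hΦ : ∀ t, Φ (-t) = Φ t) (hi : Integrable Φ)
    (u : ℝ) : ∫ v in (0 : ℝ)..u, invFt Φ v = ∫ t : ℝ, ((Real.sin (t * u) / t : ℝ) : ℂ) * Φ t := by
  have hcos : ∀ v, invFt Φ v = ∫ t : ℝ, ((Real.cos (t * v) : ℝ) : ℂ) * Φ t := by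
    intro v
    have h1 := integrable_exp_mul hi v
    have h2 := h1.comp_neg
    have e : ∫ t : ℝ, Complex.exp (-(Complex.I * ((-t : ℝ) * v))) * Φ (-t) = invFt Φ v :=
      integral_neg_eq_self (fun t : ℝ => Complex.exp (-(Complex.I * (t * v))) * Φ t) volume
    have e3 : invFt Φ v + invFt Φ v = 2 * ∫ t : ℝ, ((Real.cos (t * v) : ℝ) : ℂ) * Φ t := by
      nth_rw 2 [← e]
      unfold invFt
      rw [← integral_add h1 h2, ← integral_const_mul]
      congr 1 with t
      rw [hΦ, Complex.ofReal_cos, Complex.cos]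
      push_cast
      rw [show -(Complex.I * (-(t : ℂ) * v)) = t * v * Complex.I by ring,
        show -(Complex.I * ((t : ℂ) * v)) = -(t * v) * Complex.I by ring]
      ring
    linear_combination e3 / 2
  simp only [hcos]
  rw [intervalIntegral_integral_swap]
  · refine integral_congr_ae ?_
    filter_upwards [Measure.ae_ne volume (0 : ℝ)] with t ht
    rw [intervalIntegral.integral_mul_const, intervalIntegral.integral_ofReal,
      intervalIntegral.integral_comp_mul_left _ ht, integral_cos]
    simp [div_eq_inv_mul]
  · have h1 : Integrable (fun _ : ℝ => (1 : ℂ)) (volume.restrict (Set.uIoc 0 u)) :=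
      continuous_const.integrableOn_uIcc.mono_set Set.uIoc_subset_uIcc
    refine ((h1.mul_prod hi).bdd_mul (c := 1)
      (f := fun p : ℝ × ℝ => ((Real.cos (p.2 * p.1) : ℝ) : ℂ)) ?_ ?_).congr ?_
    · exact Continuous.aestronglyMeasurable (by fun_prop)
    · refine Eventually.of_forall fun p => ?_
      rw [Complex.norm_real]
      exact Real.abs_cos_le_one _
    · exact Eventually.of_forall fun p => by simp [Function.uncurry]

/-- **Integral of the deconvolution kernel (formula (A.1)).**
If `K` is a symmetric integrable function with `∫ K = 1` and compactly supported
Fourier transform, `f_δ^Ft` is a real-valued, symmetric, everywhere positive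
characteristic function, and `h > 0`, then `∫_{v ≤ u} L(v) dv = L₁(hu)`. -/
theorem integral_deconvolution_kernel
    (K : ℝ → ℝ) (hKint : Integrable K) (hKsym : ∀ x, K (-x) = K x)
    (hK1 : (∫ x, K x) = 1) (hKsupp : HasCompactSupport (KFtC K))
    (μδ : Measure ℝ) [IsProbabilityMeasure μδ] (fδ : ℝ → ℝ)
    (hchar : ∀ t, charFn μδ t = (fδ t : ℂ))
    (hsym : ∀ t, fδ (-t) = fδ t) (hpos : ∀ t, 0 < fδ t)
    (h : ℝ) (hh : 0 < h) (u : ℝ) :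
    (∫ v in Set.Iic u, Lker K fδ h v) = L1C K fδ h (h * u) := by
  have hcf : ∀ t, charFun μδ t = (fδ t : ℂ) := by
    intro t
    rw [← hchar, charFun_apply_real]
    unfold charFn
    simp only [mul_comm]
  -- the law of the rescaled error has characteristic function `t ↦ fδ (t / h)`
  set μ' : Measure ℝ := μδ.map (h⁻¹ * ·) with hμ'
  have : IsProbabilityMeasure μ' := Measure.isProbabilityMeasure_map (by fun_prop)
  have hcf' : ∀ t, charFun μ' t = (fδ (t / h) : ℂ) := by
    intro t
    rw [hμ', charFun_map_mul, hcf, div_eq_inv_mul]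
  have hne : ∀ t, charFun μ' t ≠ 0 := fun t => by
    rw [hcf']
    exact_mod_cast (hpos _).ne'
  have hKc := continuous_KFtC hKint
  set Φ : ℝ → ℂ := fun t => KFtC K t / charFun μ' t with hΦ
  obtain ⟨hi, hJ⟩ : Integrable Φ ∧ Integrable (invFt Φ) :=
    integrable_invFt_div_charFun (ψ := KFtC K) hKint.ofReal (fun t => rfl) hKsupp
      (hKc.integrable_of_hasCompactSupport hKsupp) μ' hne
  have hΦc : Continuous Φ := hKc.div₀ continuous_charFun hne
  have hΦe : ∀ t, Φ (-t) = Φ t := fun t => by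
    simp only [hΦ, hcf', KFtC_neg hKsym, neg_div, hsym]
  have hΦ0 : Φ 0 = 1 := by
    have : KFtC K 0 = 1 := by
      simp [KFtC, integral_complex_ofReal, hK1]
    simp [hΦ, this]
  have hL : ∀ v, Lker K fδ h v = (2 * Real.pi : ℂ)⁻¹ * invFt Φ v := by
    intro v
    simp only [Lker, invFt, hΦ, hcf', mul_div_assoc]
  have hJe : ∀ v, invFt Φ (-v) = invFt Φ v := by
    intro v
    unfold invFt
    rw [← integral_neg_eq_self]
    congr 1 with t
    rw [hΦe]
    push_cast
    congr 2
    ring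
  have hpi : (Real.pi : ℂ) ≠ 0 := by exact_mod_cast Real.pi_ne_zero
  -- substituting `t ↦ h * t` in the integral that defines `L₁`
  have hsub : ∫ t : ℝ, ((Real.sin (t * (h * u)) / t : ℝ) : ℂ) * KFtC K (h * t) / (fδ t : ℂ) =
      ∫ t : ℝ, ((Real.sin (t * u) / t : ℝ) : ℂ) * Φ t := by
    have := Measure.integral_comp_mul_left
      (fun t : ℝ => ((Real.sin (t * u) / t : ℝ) : ℂ) * Φ t) h
    rw [abs_of_pos (inv_pos.2 hh), eq_inv_smul_iff₀ hh.ne', ← integral_smul] at this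
    rw [← this]
    congr 1 with t
    rw [hΦ]
    simp only [hcf']
    rw [mul_div_cancel_left₀ t hh.ne', Complex.real_smul, mul_left_comm t h u, ← mul_assoc h t u,
      mul_div_assoc, ← mul_assoc, ← Complex.ofReal_mul]
    congr 2
    field_simp
  have hsplit : ∫ v in Set.Iic u, invFt Φ v =
      (∫ v in Set.Iic (0 : ℝ), invFt Φ v) + ∫ v in (0 : ℝ)..u, invFt Φ v := by
    rw [← intervalIntegral.integral_Iic_sub_Iic hJ.integrableOn hJ.integrableOn]
    ring
  simp only [hL]
  rw [integral_const_mul, hsplit, integral_Iic_zero_of_even hJe hJ, integral_invFt hΦc hi hJ, hΦ0,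
    intervalIntegral_invFt_of_even hΦe hi, L1C, hsub, mul_add]
  congr 1
  field_simp
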